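/- Let k be a field, and let 0 → L →^f M →^g N → 0 be a short exact sequence of k-vector spaces (f injective, g surjective, ker(g) = im(f)). Let d_L : L → L, d_M : M → M, d_N : N → N be k-linear maps with d_L ∘ d_L = 0, d_M ∘ d_M = 0, d_N ∘ d_N = 0, and f ∘ d_L = d_M ∘ f, g ∘ d_M = d_N ∘ g. Write H(L) = ker(d_L)/im(d_L), H(M) = ker(d_M)/im(d_M), H(N) = ker(d_N)/im(d_N), and let f̄ : H(L) → H(M) and ḡ : H(M) → H(N) be the maps induced by f and g. Then there exist a k-vector space E and k-linear maps α : E → H(L) and β : H(N) → E such that the sequence 0 → E →^α H(L) →^{f̄} H(M) →^{ḡ} H(N) →^β E → 0 is exact (α injective, im(α) = ker(f̄), im(f̄) = ker(ḡ), im(ḡ) = ker(β), β surjective). -/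

import Mathlib

/-!
STATEMENT 4 (Hinich's lemma, ungraded form): given a short exact sequence
`0 → L → M → N → 0` of `k`-vector spaces compatible with square-zero
endomorphisms `d_L, d_M, d_N`, there are a vector space `E` and linear maps
`α : E → H(L)`, `β : H(N) → E` making
`0 → E → H(L) → H(M) → H(N) → E → 0` exact.
-/

/-- The homology `ker d / im d` of a linear endomorphism `d` with `d ∘ d = 0`,
realized as the quotient of `ker d` by the pullback of `im d`. -/
abbrev homologyOf {k V : Type*} [Field k] [AddCommGroup V] [Module k V]
    (d : V →ₗ[k] V) : Type _ :=
  LinearMap.ker d ⧸ (LinearMap.range d).comap (LinearMap.ker d).subtype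

/-- The map induced on homology by a linear map `f` commuting with the
differentials (`d_W ∘ f = f ∘ d_V`). -/
def inducedHomologyMap {k V W : Type*} [Field k]
    [AddCommGroup V] [Module k V] [AddCommGroup W] [Module k W]
    (dV : V →ₗ[k] V) (dW : W →ₗ[k] W) (f : V →ₗ[k] W)
    (hcomm : dW ∘ₗ f = f ∘ₗ dV) :
    homologyOf dV →ₗ[k] homologyOf dW :=
  Submodule.mapQ _ _
    (f.restrict (p := LinearMap.ker dV) (q := LinearMap.ker dW)
      (fun x hx => by
        simp only [LinearMap.mem_ker] at hx ⊢
        have h := LinearMap.congr_fun hcomm x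
        simp only [LinearMap.comp_apply] at h
        rw [h, hx, map_zero]))
    (by
      rintro ⟨x, hxk⟩ hx
      simp only [Submodule.mem_comap, Submodule.coe_subtype] at hx ⊢
      obtain ⟨y, hy⟩ := hx
      refine ⟨f y, ?_⟩
      have h := LinearMap.congr_fun hcomm y
      simp only [LinearMap.comp_apply] at h
      rw [h, hy]
      rfl)

universe u v w x

/-!
Since `d ∘ d = 0`, the differential of `V` factors through `V / im d → ker d`, whose kernel and
cokernel are both `H(V)`. Passing to `V / im d` is right exact and passing to `ker d` is left exact,
so the snake lemma applies to these maps for `L`, `M`, `N` and yields `δ : H(N) → H(L)` closing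
`H(L) → H(M) → H(N)` up to an exact triangle. Take for `E` the image of `δ`.
-/

open Function

/-- The homology `ker d / im d` of a module with a differential `d`. It is `homologyOf` over an
arbitrary ring; as there, `im d` is pulled back to `ker d`, so that the definition makes sense
before `d ∘ d = 0` is known. -/
abbrev DifferentialHomology {R V : Type*} [Ring R] [AddCommGroup V] [Module R V]
    (d : V →ₗ[R] V) : Type _ :=
  LinearMap.ker d ⧸ (LinearMap.range d).comap (LinearMap.ker d).subtype

namespace DifferentialHomology

section Ring

variable {R V W L M N : Type*} [Ring R]
  [AddCommGroup V] [Module R V] [AddCommGroup W] [Module R W]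
  [AddCommGroup L] [Module R L] [AddCommGroup M] [Module R M] [AddCommGroup N] [Module R N]
  {dV : V →ₗ[R] V} {dW : W →ₗ[R] W} {dL : L →ₗ[R] L} {dM : M →ₗ[R] M} {dN : N →ₗ[R] N}
  {f : L →ₗ[R] M} {g : M →ₗ[R] N}

/-- The map `ker d_V → ker d_W` on cycles induced by a map commuting with the differentials. -/
def cyclesMap (f : V →ₗ[R] W) (hcomm : dW ∘ₗ f = f ∘ₗ dV) :
    LinearMap.ker dV →ₗ[R] LinearMap.ker dW :=
  f.restrict fun x hx ↦ by
    rw [LinearMap.mem_ker, ← LinearMap.comp_apply, hcomm, LinearMap.comp_apply,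
      LinearMap.mem_ker.mp hx, map_zero]

lemma range_le_comap_range (f : V →ₗ[R] W) (hcomm : dW ∘ₗ f = f ∘ₗ dV) :
    LinearMap.range dV ≤ (LinearMap.range dW).comap f := by
  rintro _ ⟨x, rfl⟩
  exact ⟨f x, LinearMap.congr_fun hcomm x⟩

/-- The map `V / im d_V → W / im d_W` on cokernels induced by a map commuting with the
differentials. -/
def cokerMap (f : V →ₗ[R] W) (hcomm : dW ∘ₗ f = f ∘ₗ dV) :
    (V ⧸ LinearMap.range dV) →ₗ[R] W ⧸ LinearMap.range dW :=
  Submodule.mapQ _ _ f (range_le_comap_range f hcomm)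

/-- The map on homology induced by a map commuting with the differentials; it is
`inducedHomologyMap` over an arbitrary ring. -/
def map (f : V →ₗ[R] W) (hcomm : dW ∘ₗ f = f ∘ₗ dV) :
    DifferentialHomology dV →ₗ[R] DifferentialHomology dW :=
  Submodule.mapQ _ _ (cyclesMap f hcomm) fun _ hx ↦ range_le_comap_range f hcomm hx

/-- The inclusion of `ker d / im d` into `V / im d`. -/
def toCoker (d : V →ₗ[R] V) : DifferentialHomology d →ₗ[R] V ⧸ LinearMap.range d :=
  Submodule.mapQ _ _ (LinearMap.ker d).subtype le_rfl

/-- The differential viewed as a map `V / im d → ker d`. Both its kernel and its cokernel are the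
homology of `d`. -/
def cokerToCycles (d : V →ₗ[R] V) (hd : d ∘ₗ d = 0) :
    (V ⧸ LinearMap.range d) →ₗ[R] LinearMap.ker d :=
  Submodule.liftQ _
    (d.codRestrict (LinearMap.ker d) fun x ↦ LinearMap.mem_ker.mpr (LinearMap.congr_fun hd x)) <| by
    rw [LinearMap.ker_codRestrict]
    exact LinearMap.range_le_ker_iff.mpr hd

lemma toCoker_injective (d : V →ₗ[R] V) : Injective (toCoker d) := by
  rw [← LinearMap.ker_eq_bot, toCoker, Submodule.ker_mapQ, Submodule.mkQ_map_self]

lemma exact_toCoker_cokerToCycles (d : V →ₗ[R] V) (hd : d ∘ₗ d = 0) :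
    Exact (toCoker d) (cokerToCycles d hd) := by
  rw [LinearMap.exact_iff, toCoker, cokerToCycles, Submodule.range_mapQ, Submodule.ker_liftQ,
    LinearMap.ker_codRestrict, Submodule.range_subtype]

lemma exact_cokerToCycles_mkQ (d : V →ₗ[R] V) (hd : d ∘ₗ d = 0) :
    Exact (cokerToCycles d hd)
      ((LinearMap.range d).comap (LinearMap.ker d).subtype).mkQ := by
  rw [LinearMap.exact_iff, Submodule.ker_mkQ, cokerToCycles, Submodule.range_liftQ,
    LinearMap.range_codRestrict]

lemma cokerToCycles_naturality (f : V →ₗ[R] W) (hcomm : dW ∘ₗ f = f ∘ₗ dV)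
    (hdV : dV ∘ₗ dV = 0) (hdW : dW ∘ₗ dW = 0) :
    cyclesMap f hcomm ∘ₗ cokerToCycles dV hdV = cokerToCycles dW hdW ∘ₗ cokerMap f hcomm := by
  ext x
  exact (LinearMap.congr_fun hcomm x).symm

lemma toCoker_naturality (f : V →ₗ[R] W) (hcomm : dW ∘ₗ f = f ∘ₗ dV) :
    cokerMap f hcomm ∘ₗ toCoker dV = toCoker dW ∘ₗ map f hcomm := by
  ext x
  rfl

lemma cyclesMap_injective (hf : Injective f) (hfd : dM ∘ₗ f = f ∘ₗ dL) :
    Injective (cyclesMap f hfd) :=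
  fun _ _ h ↦ Subtype.ext (hf (congrArg Subtype.val h))

lemma cokerMap_surjective (hg : Surjective g) (hgd : dN ∘ₗ g = g ∘ₗ dM) :
    Surjective (cokerMap g hgd) := by
  rw [← LinearMap.range_eq_top, cokerMap, Submodule.range_mapQ, LinearMap.range_eq_top.mpr hg,
    Submodule.map_top, Submodule.range_mkQ]

lemma exact_cyclesMap (hf : Injective f) (hfg : Exact f g) (hfd : dM ∘ₗ f = f ∘ₗ dL)
    (hgd : dN ∘ₗ g = g ∘ₗ dM) : Exact (cyclesMap f hfd) (cyclesMap g hgd) := by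
  rintro ⟨m, hm⟩
  constructor
  · intro hgm
    obtain ⟨l, rfl⟩ := (hfg m).mp (congrArg Subtype.val hgm)
    have hl : dL l = 0 := hf <| by
      rw [← LinearMap.comp_apply, ← hfd, LinearMap.comp_apply, hm, map_zero]
    exact ⟨⟨l, hl⟩, rfl⟩
  · rintro ⟨l, hl⟩
    exact Subtype.ext ((hfg m).mpr ⟨l, congrArg Subtype.val hl⟩)

lemma range_le_map_range (hg : Surjective g) (hgd : dN ∘ₗ g = g ∘ₗ dM) :
    LinearMap.range dN ≤ (LinearMap.range dM).map g := by
  rw [← LinearMap.range_comp, ← hgd, LinearMap.range_comp_of_range_eq_top _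
    (LinearMap.range_eq_top.mpr hg)]

lemma exact_cokerMap (hg : Surjective g) (hfg : Exact f g) (hfd : dM ∘ₗ f = f ∘ₗ dL)
    (hgd : dN ∘ₗ g = g ∘ₗ dM) : Exact (cokerMap f hfd) (cokerMap g hgd) :=
  (hfg.exact_mapQ_iff _ _).mpr (inf_le_right.trans (range_le_map_range hg hgd))

lemma exact_map (hf : Injective f) (hg : Surjective g) (hfg : Exact f g) (hdM : dM ∘ₗ dM = 0)
    (hfd : dM ∘ₗ f = f ∘ₗ dL) (hgd : dN ∘ₗ g = g ∘ₗ dM) : Exact (map f hfd) (map g hgd) := by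
  refine ((exact_cyclesMap hf hfg hfd hgd).exact_mapQ_iff _ _).mpr ?_
  rintro n ⟨-, hn⟩
  obtain ⟨_, ⟨m, rfl⟩, hm⟩ := range_le_map_range hg hgd hn
  exact ⟨⟨dM m, LinearMap.congr_fun hdM m⟩, ⟨m, rfl⟩, Subtype.ext hm⟩

end Ring

section CommRing

variable {R L M N : Type*} [CommRing R]
  [AddCommGroup L] [Module R L] [AddCommGroup M] [Module R M] [AddCommGroup N] [Module R N]
  {dL : L →ₗ[R] L} {dM : M →ₗ[R] M} {dN : N →ₗ[R] N} {f : L →ₗ[R] M} {g : M →ₗ[R] N}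

theorem exists_exact_triangle (hf : Injective f) (hg : Surjective g) (hfg : Exact f g)
    (hdL : dL ∘ₗ dL = 0) (hdM : dM ∘ₗ dM = 0) (hdN : dN ∘ₗ dN = 0)
    (hfd : dM ∘ₗ f = f ∘ₗ dL) (hgd : dN ∘ₗ g = g ∘ₗ dM) :
    ∃ δ : DifferentialHomology dN →ₗ[R] DifferentialHomology dL,
      Exact (map f hfd) (map g hgd) ∧ Exact (map g hgd) δ ∧ Exact δ (map f hfd) := by
  have hcoker := exact_cokerMap hg hfg hfd hgd
  have hcycles := exact_cyclesMap hf hfg hfd hgd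
  have hnatf := cokerToCycles_naturality f hfd hdL hdM
  have hnatg := cokerToCycles_naturality g hgd hdM hdN
  have hιM := exact_toCoker_cokerToCycles dM hdM
  have hιN := exact_toCoker_cokerToCycles dN hdN
  have hπL := exact_cokerToCycles_mkQ dL hdL
  have hπM := exact_cokerToCycles_mkQ dM hdM
  have hsurj := cokerMap_surjective hg hgd
  have hinj := cyclesMap_injective hf hfd
  exact ⟨SnakeLemma.δ' _ _ _ _ _ hcoker _ _ hcycles hnatf hnatg _ hιN _ hπL hsurj hinj,
    exact_map hf hg hfg hdM hfd hgd,
    SnakeLemma.exact_δ'_right _ _ _ _ _ hcoker _ _ hcycles hnatf hnatg _ hιM _ hιN _ hπL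
      hsurj hinj _ (toCoker_naturality g hgd) (toCoker_injective dN),
    SnakeLemma.exact_δ'_left _ _ _ _ _ hcoker _ _ hcycles hnatf hnatg _ hιN _ hπL _ hπM
      hsurj hinj _ (Submodule.mapQ_mkQ _ _ _) (Submodule.mkQ_surjective _)⟩

end CommRing

end DifferentialHomology

theorem hinich_six_term_exact_general
    {R : Type u} {L : Type v} {M : Type w} {N : Type x} [CommRing R]
    [AddCommGroup L] [Module R L] [AddCommGroup M] [Module R M]
    [AddCommGroup N] [Module R N]
    (f : L →ₗ[R] M) (g : M →ₗ[R] N)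
    (hf : Injective f) (hg : Surjective g) (hfg : LinearMap.ker g = LinearMap.range f)
    (dL : L →ₗ[R] L) (dM : M →ₗ[R] M) (dN : N →ₗ[R] N)
    (hdL : dL ∘ₗ dL = 0) (hdM : dM ∘ₗ dM = 0) (hdN : dN ∘ₗ dN = 0)
    (hfd : dM ∘ₗ f = f ∘ₗ dL) (hgd : dN ∘ₗ g = g ∘ₗ dM) :
    ∃ (E : Type v) (_ : AddCommGroup E) (_ : Module R E)
      (α : E →ₗ[R] DifferentialHomology dL) (β : DifferentialHomology dN →ₗ[R] E),
      Injective α ∧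
      LinearMap.range α = LinearMap.ker (DifferentialHomology.map f hfd) ∧
      LinearMap.range (DifferentialHomology.map f hfd) =
        LinearMap.ker (DifferentialHomology.map g hgd) ∧
      LinearMap.range (DifferentialHomology.map g hgd) = LinearMap.ker β ∧
      Surjective β := by
  obtain ⟨δ, hfg', hgδ, hδf⟩ := DifferentialHomology.exists_exact_triangle hf hg
    (LinearMap.exact_iff.mpr hfg) hdL hdM hdN hfd hgd
  refine ⟨LinearMap.range δ, inferInstance, inferInstance, (LinearMap.range δ).subtype,
    δ.rangeRestrict, Subtype.val_injective, ?_, hfg'.linearMap_ker_eq.symm, ?_,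
    δ.surjective_rangeRestrict⟩
  · rw [Submodule.range_subtype, hδf.linearMap_ker_eq]
  · rw [LinearMap.ker_rangeRestrict, hgδ.linearMap_ker_eq]

theorem hinich_six_term_exact
    {k : Type u} {L : Type v} {M : Type w} {N : Type x} [Field k]
    [AddCommGroup L] [Module k L] [AddCommGroup M] [Module k M]
    [AddCommGroup N] [Module k N]
    (f : L →ₗ[k] M) (g : M →ₗ[k] N)
    (hf : Function.Injective f) (hg : Function.Surjective g)
    (hfg : LinearMap.ker g = LinearMap.range f)
    (dL : L →ₗ[k] L) (dM : M →ₗ[k] M) (dN : N →ₗ[k] N)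
    (hdL : dL ∘ₗ dL = 0) (hdM : dM ∘ₗ dM = 0) (hdN : dN ∘ₗ dN = 0)
    (hfd : dM ∘ₗ f = f ∘ₗ dL) (hgd : dN ∘ₗ g = g ∘ₗ dM) :
    ∃ (E : Type v) (_ : AddCommGroup E) (_ : Module k E)
      (α : E →ₗ[k] homologyOf dL) (β : homologyOf dN →ₗ[k] E),
      Function.Injective α ∧
      LinearMap.range α = LinearMap.ker (inducedHomologyMap dL dM f hfd) ∧
      LinearMap.range (inducedHomologyMap dL dM f hfd) =
        LinearMap.ker (inducedHomologyMap dM dN g hgd) ∧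
      LinearMap.range (inducedHomologyMap dM dN g hgd) = LinearMap.ker β ∧
      Function.Surjective β :=
  hinich_six_term_exact_general f g hf hg hfg dL dM dN hdL hdM hdN hfd hgd
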